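/- Tail feasibility (persistence of feasibility along any feasible plan): let h : ℕ, x : X, and let u : ℕ → U be a feasible plan at x, i.e. 0 ≤ l (traj x u k) for all k < h and traj x u h ∈ S. Then for every m ≤ h, the state traj x u m reached after executing the first m controls of the plan is again MPC-feasible for horizon h. -/

import Mathlib

/-- Discrete-time trajectory under dynamics `f`, initial state `x`, controls `u`. -/
def traj {X U : Type*} (f : X → U → X) (x : X) (u : ℕ → U) : ℕ → X
  | 0 => x
  | n + 1 => f (traj f x u n) (u n)

/-- The safe set: states from which some control sequence keeps `l ≥ 0` forever. -/
def safeSet {X U : Type*} (f : X → U → X) (l : X → ℝ) : Set X :=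
  {x | ∃ u : ℕ → U, ∀ n : ℕ, 0 ≤ l (traj f x u n)}

/-- MPC feasibility for planning horizon `h`: some control keeps the constraint satisfied
for the first `h` steps and steers the terminal state into the safe set. -/
def MPCFeasible {X U : Type*} (f : X → U → X) (l : X → ℝ) (h : ℕ) (x : X) : Prop :=
  ∃ u : ℕ → U, (∀ k < h, 0 ≤ l (traj f x u k)) ∧ traj f x u h ∈ safeSet f l

/-!
A state from which one admissible step leads into the safe set is itself safe, so safety propagates
backwards along a feasible plan from its terminal state. Conversely, a control that keeps a safe
state safe forever is a feasible plan for every horizon, since each state it visits is again safe.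
-/

section

variable {X U : Type*} {f : X → U → X} {l : X → ℝ} {x : X} {u : ℕ → U}

theorem traj_add (f : X → U → X) (x : X) (u : ℕ → U) (m n : ℕ) :
    traj f x u (m + n) = traj f (traj f x u m) (fun k => u (m + k)) n := by
  induction n with
  | zero => rfl
  | succ n ih => exact congrArg (f · (u (m + n))) ih

theorem traj_succ' (f : X → U → X) (x : X) (u : ℕ → U) (n : ℕ) :
    traj f x u (n + 1) = traj f (f x (u 0)) (fun k => u (k + 1)) n := by
  simpa only [Nat.add_comm 1, traj] using traj_add f x u 1 n

theorem mem_safeSet_of_step {a : U} (hx : 0 ≤ l x) (ha : f x a ∈ safeSet f l) :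
    x ∈ safeSet f l := by
  obtain ⟨v, hv⟩ := ha
  refine ⟨fun n => n.casesOn a v, fun n => ?_⟩
  cases n with
  | zero => exact hx
  | succ n =>
    rw [traj_succ']
    exact hv n

theorem traj_mem_safeSet_of_forall_nonneg (hu : ∀ n, 0 ≤ l (traj f x u n)) (m : ℕ) :
    traj f x u m ∈ safeSet f l :=
  ⟨fun k => u (m + k), fun n => traj_add f x u m n ▸ hu (m + n)⟩

theorem mpcFeasible_of_mem_safeSet (hx : x ∈ safeSet f l) (h : ℕ) : MPCFeasible f l h x := by
  obtain ⟨u, hu⟩ := hx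
  exact ⟨u, fun k _ => hu k, traj_mem_safeSet_of_forall_nonneg hu h⟩

theorem traj_mem_safeSet_of_le {h m : ℕ} (hCons : ∀ k < h, 0 ≤ l (traj f x u k))
    (hEnd : traj f x u h ∈ safeSet f l) (hm : m ≤ h) : traj f x u m ∈ safeSet f l := by
  induction hm using Nat.decreasingInduction with
  | self => exact hEnd
  | of_succ k hk ih => exact mem_safeSet_of_step (hCons k hk) ih

end

/-- Tail feasibility: along any feasible plan, each intermediate state reached after
executing the first `m ≤ h` controls is again MPC-feasible for horizon `h`. -/
theorem mpcFeasible_tail {X U : Type*} (f : X → U → X) (l : X → ℝ)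
    (h : ℕ) (x : X) (u : ℕ → U)
    (hCons : ∀ k < h, 0 ≤ l (traj f x u k))
    (hEnd : traj f x u h ∈ safeSet f l) :
    ∀ m ≤ h, MPCFeasible f l h (traj f x u m) := fun _ hm =>
  mpcFeasible_of_mem_safeSet (traj_mem_safeSet_of_le hCons hEnd hm) h
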